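/- Let d = 2k+2 with k even, and let Γ^0, …, Γ^{2k+1} be complex n × n matrices satisfying the Lorentz Clifford relations and the chiral reality pattern. Then M := Γ^0 Γ^1 Γ^3 Γ^5 ⋯ Γ^{2k+1} (the product of Γ^0 with all odd-index Gamma matrices) is invertible, M conj(Γ^μ) M^{−1} = −Γ^μ for every μ = 0, 1, …, 2k+1, and M · conj(M) = (−1)^{k(k+1)/2} I. (This M is the charge-conjugation matrix M_C, and M·conj(M) computes C^2 on a Dirac fermion.) -/

import Mathlib

/-!
`M` is a product of `k + 2` pairwise anticommuting matrices. Moving `Γ^μ` through it costs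
`(-1)^(k+2)` if `Γ^μ` is not a factor and `(-1)^(k+1)` if it is, since one of the transpositions is
then trivial. The factors of `M` are exactly the real Gamma matrices, so entrywise conjugation
contributes the missing sign in the first case, and `M conj(Γ^μ) = (-1)^(k+1) Γ^μ M` for every `μ`.
Moreover `M` is real, so `M conj(M) = M²`, and reordering `M²` into the product of the squares of
its factors costs `(-1)^((k+2) choose 2)`.
-/

open Matrix

/-- Complex square matrices `Γ^0, …, Γ^{d-1}` satisfy the Lorentz Clifford relations if
`Γ^μ Γ^ν + Γ^ν Γ^μ = 2 η^{μν} I` where `η = diag(+1, -1, …, -1)`. -/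
def LorentzClifford {α : Type*} [Fintype α] [DecidableEq α] (d : ℕ)
    (Γ : ℕ → Matrix α α ℂ) : Prop :=
  ∀ μ < d, ∀ ν < d, Γ μ * Γ ν + Γ ν * Γ μ =
    if μ = ν then (if μ = 0 then (2 : ℂ) else (-2 : ℂ)) • 1 else 0

/-- The chiral reality pattern: `Γ^0` is real, `Γ^j` is real for odd `j`, and `Γ^j` is
imaginary for even `j ≥ 2` (here `conj` is the entrywise complex conjugate). -/
def ChiralReality {α : Type*} [Fintype α] [DecidableEq α] (d : ℕ)
    (Γ : ℕ → Matrix α α ℂ) : Prop :=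
  (Γ 0).map (starRingEnd ℂ) = Γ 0 ∧
  (∀ j, 1 ≤ j → j < d → j % 2 = 1 → (Γ j).map (starRingEnd ℂ) = Γ j) ∧
  (∀ j, 1 ≤ j → j < d → j % 2 = 0 → (Γ j).map (starRingEnd ℂ) = -(Γ j))

section Anticommute

variable {R : Type*}

/-- Two elements anticommute if exchanging them changes the sign of their product, as distinct Gamma
matrices do. In characteristic two this agrees with commuting. -/
def Anticommute [Mul R] [Neg R] (a b : R) : Prop :=
  a * b = -(b * a)

lemma Anticommute.symm [Mul R] [InvolutiveNeg R] {a b : R} (h : Anticommute a b) :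
    Anticommute b a :=
  (neg_eq_iff_eq_neg.mpr h).symm

variable [Monoid R] [HasDistribNeg R]

lemma list_prod_mul_of_forall_anticommute {x : R} {l : List R} (h : ∀ a ∈ l, Anticommute a x) :
    l.prod * x = (-1) ^ l.length * (x * l.prod) := by
  induction l with
  | nil => simp
  | cons a l ih =>
    obtain ⟨hax, hl⟩ := List.forall_mem_cons.mp h
    have hcomm : Commute a ((-1) ^ l.length) := (Commute.neg_one_right a).pow_right _
    calc (a :: l).prod * x = a * (-1) ^ l.length * (x * l.prod) := by
          rw [List.prod_cons, mul_assoc, ih hl, mul_assoc]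
      _ = (-1) ^ l.length * (a * x * l.prod) := by rw [hcomm.eq]; simp only [mul_assoc]
      _ = (-1) ^ (a :: l).length * (x * (a :: l).prod) := by
          rw [hax, List.length_cons, pow_succ, List.prod_cons]
          simp only [mul_assoc, neg_mul, mul_neg, one_mul]

lemma list_prod_mul_of_mem_of_pairwise_anticommute {l : List R} (hl : l.Pairwise Anticommute)
    {x : R} (hx : x ∈ l) :
    l.prod * x = (-1) ^ (l.length + 1) * (x * l.prod) := by
  obtain ⟨s, t, rfl⟩ := List.append_of_mem hx
  obtain ⟨-, hxt, hst⟩ := List.pairwise_append.mp hl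
  have hs : s.prod * x = (-1) ^ s.length * (x * s.prod) :=
    list_prod_mul_of_forall_anticommute fun a ha => hst a ha x List.mem_cons_self
  have ht : t.prod * x = (-1) ^ t.length * (x * t.prod) :=
    list_prod_mul_of_forall_anticommute fun a ha =>
      ((List.pairwise_cons.mp hxt).1 a ha).symm
  have hcomm : Commute (s.prod * x) ((-1) ^ t.length) := (Commute.neg_one_right _).pow_right _
  calc (s ++ x :: t).prod * x = s.prod * x * (t.prod * x) := by
        simp only [List.prod_append, List.prod_cons, mul_assoc]
    _ = (-1) ^ t.length * (s.prod * x * (x * t.prod)) := by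
        rw [ht, ← mul_assoc, hcomm.eq, mul_assoc]
    _ = (-1) ^ (t.length + s.length) * (x * (s ++ x :: t).prod) := by
        rw [hs, pow_add]
        simp only [List.prod_append, List.prod_cons, mul_assoc]
    _ = (-1) ^ ((s ++ x :: t).length + 1) * (x * (s ++ x :: t).prod) := by
        have hlen : (s ++ x :: t).length + 1 = t.length + s.length + 2 := by
          rw [List.length_append, List.length_cons]
          omega
        rw [hlen, pow_add _ _ 2, neg_one_sq, mul_one]

lemma list_prod_mul_self_of_pairwise_anticommute {l : List R} (hl : l.Pairwise Anticommute) :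
    l.prod * l.prod = (-1) ^ l.length.choose 2 * (l.map fun a => a * a).prod := by
  induction l with
  | nil => simp
  | cons a l ih =>
    obtain ⟨ha, hl⟩ := List.pairwise_cons.mp hl
    have hmove : l.prod * a = (-1) ^ l.length * (a * l.prod) :=
      list_prod_mul_of_forall_anticommute fun b hb => (ha b hb).symm
    have hcomm (b : R) (m : ℕ) : b * (-1) ^ m = (-1) ^ m * b :=
      (Commute.neg_one_right b).pow_right m
    calc (a :: l).prod * (a :: l).prod = a * (l.prod * a) * l.prod := by
          simp only [List.prod_cons, mul_assoc]
      _ = (-1) ^ l.length * (a * a * (l.prod * l.prod)) := by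
          rw [hmove, ← mul_assoc a, hcomm]
          simp only [mul_assoc]
      _ = (-1) ^ (l.length + l.length.choose 2) * (a * a * (l.map fun b => b * b).prod) := by
          rw [ih hl, ← mul_assoc (a * a), hcomm, pow_add]
          simp only [mul_assoc]
      _ = (-1) ^ (a :: l).length.choose 2 * ((a :: l).map fun b => b * b).prod := by
          rw [List.length_cons, Nat.choose_succ_succ', Nat.choose_one_right, List.map_cons,
            List.prod_cons]

end Anticommute

section Clifford

variable {α : Type*} [Fintype α] [DecidableEq α] {d k : ℕ} {Γ : ℕ → Matrix α α ℂ}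

lemma LorentzClifford.anticommute (hΓ : LorentzClifford d Γ) {μ ν : ℕ} (hμ : μ < d) (hν : ν < d)
    (h : μ ≠ ν) : Anticommute (Γ μ) (Γ ν) :=
  eq_neg_of_add_eq_zero_left <| by simpa only [if_neg h] using hΓ μ hμ ν hν

lemma LorentzClifford.mul_self (hΓ : LorentzClifford d Γ) {μ : ℕ} (hμ : μ < d) :
    Γ μ * Γ μ = if μ = 0 then 1 else -1 := by
  have h := hΓ μ hμ μ hμ
  rw [if_pos rfl, ← two_smul ℂ] at h
  apply smul_right_injective _ (two_ne_zero : (2 : ℂ) ≠ 0)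
  split_ifs at h ⊢ <;> simpa using h

/-- The indices `0, 1, 3, …, 2k+1` of the factors of the charge-conjugation matrix. -/
def chargeIndices (k : ℕ) : List ℕ :=
  0 :: List.ofFn fun a : Fin (k + 1) => 2 * (a : ℕ) + 1

/-- The charge-conjugation matrix `M_C = Γ^0 Γ^1 Γ^3 ⋯ Γ^{2k+1}`, the factors being multiplied in
increasing order of their indices. -/
def chargeConjugation (Γ : ℕ → Matrix α α ℂ) (k : ℕ) : Matrix α α ℂ :=
  ((chargeIndices k).map Γ).prod

lemma chargeConjugation_eq_mul_prod_ofFn (Γ : ℕ → Matrix α α ℂ) (k : ℕ) :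
    chargeConjugation Γ k =
      Γ 0 * (List.ofFn fun a : Fin (k + 1) => Γ (2 * (a : ℕ) + 1)).prod := by
  rw [chargeConjugation, chargeIndices, List.map_cons, List.prod_cons, List.map_ofFn]
  rfl

lemma length_chargeIndices (k : ℕ) : (chargeIndices k).length = k + 2 := by
  simp [chargeIndices]

lemma mem_chargeIndices {μ : ℕ} : μ ∈ chargeIndices k ↔ μ < 2 * k + 2 ∧ (μ = 0 ∨ Odd μ) := by
  simp only [chargeIndices, List.mem_cons, List.mem_ofFn]
  constructor
  · rintro (rfl | ⟨a, rfl⟩)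
    · exact ⟨by omega, .inl rfl⟩
    · exact ⟨by omega, .inr ⟨a, rfl⟩⟩
  · rintro ⟨hμ, rfl | ⟨j, rfl⟩⟩
    · exact .inl rfl
    · exact .inr ⟨⟨j, by omega⟩, rfl⟩

lemma nodup_chargeIndices (k : ℕ) : (chargeIndices k).Nodup := by
  rw [chargeIndices, List.nodup_cons, List.nodup_ofFn, List.mem_ofFn]
  refine ⟨fun ⟨_, _⟩ => by omega, fun a b hab => Fin.ext ?_⟩
  dsimp only at hab
  omega

lemma LorentzClifford.pairwise_anticommute_map_chargeIndices (hΓ : LorentzClifford (2 * k + 2) Γ) :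
    ((chargeIndices k).map Γ).Pairwise Anticommute :=
  List.pairwise_map.mpr <| (nodup_chargeIndices k).imp_of_mem fun hμ hν h =>
    hΓ.anticommute (mem_chargeIndices.mp hμ).1 (mem_chargeIndices.mp hν).1 h

lemma LorentzClifford.chargeConjugation_mul_of_mem (hΓ : LorentzClifford (2 * k + 2) Γ) {μ : ℕ}
    (hμ : μ ∈ chargeIndices k) :
    chargeConjugation Γ k * Γ μ = (-1) ^ (k + 1) * (Γ μ * chargeConjugation Γ k) := by
  have h := list_prod_mul_of_mem_of_pairwise_anticommute
    hΓ.pairwise_anticommute_map_chargeIndices (List.mem_map_of_mem (f := Γ) hμ)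
  rwa [List.length_map, length_chargeIndices, pow_succ, pow_succ, mul_assoc _ (-1) (-1),
    neg_one_mul, neg_neg, mul_one] at h

lemma LorentzClifford.chargeConjugation_mul_of_notMem (hΓ : LorentzClifford (2 * k + 2) Γ) {μ : ℕ}
    (hμd : μ < 2 * k + 2) (hμ : μ ∉ chargeIndices k) :
    chargeConjugation Γ k * Γ μ = -((-1) ^ (k + 1) * (Γ μ * chargeConjugation Γ k)) := by
  have hanti : ∀ A ∈ (chargeIndices k).map Γ, Anticommute A (Γ μ) :=
    List.forall_mem_map.mpr fun ν hν =>
      hΓ.anticommute (mem_chargeIndices.mp hν).1 hμd fun h => hμ (h ▸ hν)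
  have h := list_prod_mul_of_forall_anticommute hanti
  rwa [List.length_map, length_chargeIndices, pow_succ, mul_neg_one, neg_mul] at h

lemma LorentzClifford.chargeConjugation_mul_self (hΓ : LorentzClifford (2 * k + 2) Γ) :
    chargeConjugation Γ k * chargeConjugation Γ k = (-1) ^ (k * (k + 1) / 2) := by
  have hsquares : (((chargeIndices k).map Γ).map fun A => A * A).prod = (-1) ^ (k + 1) := by
    simp [chargeIndices, List.map_ofFn, Function.comp_def, hΓ.mul_self, pow_succ]
  have hchoose : (k + 2).choose 2 = k * (k + 1) / 2 + (k + 1) := by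
    rw [Nat.choose_succ_succ', Nat.choose_one_right, Nat.choose_two_right, Nat.add_sub_cancel,
      mul_comm, add_comm]
  calc chargeConjugation Γ k * chargeConjugation Γ k
      = (-1) ^ (k + 2).choose 2 * (-1) ^ (k + 1) := by
        rw [chargeConjugation, list_prod_mul_self_of_pairwise_anticommute
          hΓ.pairwise_anticommute_map_chargeIndices, hsquares, List.length_map,
          length_chargeIndices]
    _ = (-1) ^ (k * (k + 1) / 2) := by
        rw [hchoose, pow_add, mul_assoc, ← pow_add, (Even.add_self _).neg_one_pow, mul_one]

lemma LorentzClifford.isUnit_chargeConjugation (hΓ : LorentzClifford (2 * k + 2) Γ) :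
    IsUnit (chargeConjugation Γ k) := by
  rw [← isUnit_pow_iff two_ne_zero, sq, hΓ.chargeConjugation_mul_self]
  exact isUnit_neg_one.pow _

lemma ChiralReality.map_conj_of_mem (hreal : ChiralReality (2 * k + 2) Γ) {μ : ℕ}
    (hμ : μ ∈ chargeIndices k) : (Γ μ).map (starRingEnd ℂ) = Γ μ := by
  obtain ⟨hμd, rfl | hodd⟩ := mem_chargeIndices.mp hμ
  · exact hreal.1
  · exact hreal.2.1 μ hodd.pos hμd (Nat.odd_iff.mp hodd)

lemma ChiralReality.map_conj_of_notMem (hreal : ChiralReality (2 * k + 2) Γ) {μ : ℕ}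
    (hμd : μ < 2 * k + 2) (hμ : μ ∉ chargeIndices k) :
    (Γ μ).map (starRingEnd ℂ) = -Γ μ := by
  rw [mem_chargeIndices, not_and, not_or, Nat.not_odd_iff] at hμ
  obtain ⟨hpos, heven⟩ := hμ hμd
  exact hreal.2.2 μ (Nat.pos_of_ne_zero hpos) hμd heven

lemma ChiralReality.map_conj_chargeConjugation (hreal : ChiralReality (2 * k + 2) Γ) :
    (chargeConjugation Γ k).map (starRingEnd ℂ) = chargeConjugation Γ k := by
  rw [← RingHom.mapMatrix_apply, chargeConjugation, map_list_prod, List.map_map]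
  exact congrArg List.prod <| List.map_congr_left fun μ hμ => hreal.map_conj_of_mem hμ

lemma chargeConjugation_mul_map_conj (hΓ : LorentzClifford (2 * k + 2) Γ)
    (hreal : ChiralReality (2 * k + 2) Γ) {μ : ℕ} (hμd : μ < 2 * k + 2) :
    chargeConjugation Γ k * (Γ μ).map (starRingEnd ℂ) =
      (-1) ^ (k + 1) * Γ μ * chargeConjugation Γ k := by
  by_cases hμ : μ ∈ chargeIndices k
  · rw [hreal.map_conj_of_mem hμ, hΓ.chargeConjugation_mul_of_mem hμ, mul_assoc]
  · rw [hreal.map_conj_of_notMem hμd hμ, mul_neg, hΓ.chargeConjugation_mul_of_notMem hμd hμ,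
      neg_neg, mul_assoc]

theorem charge_conjugation_matrix_k_even_general (hΓ : LorentzClifford (2 * k + 2) Γ)
    (hreal : ChiralReality (2 * k + 2) Γ) :
    IsUnit (chargeConjugation Γ k) ∧
    (∀ μ < 2 * k + 2, chargeConjugation Γ k * (Γ μ).map (starRingEnd ℂ) *
      (chargeConjugation Γ k)⁻¹ = (-1) ^ (k + 1) * Γ μ) ∧
    chargeConjugation Γ k * (chargeConjugation Γ k).map (starRingEnd ℂ) =
      (-1 : ℂ) ^ (k * (k + 1) / 2) • 1 := by
  refine ⟨hΓ.isUnit_chargeConjugation, fun μ hμ => ?_, ?_⟩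
  · rw [chargeConjugation_mul_map_conj hΓ hreal hμ]
    exact mul_nonsing_inv_cancel_right _ _
      ((isUnit_iff_isUnit_det _).mp hΓ.isUnit_chargeConjugation)
  · rw [hreal.map_conj_chargeConjugation, hΓ.chargeConjugation_mul_self, Algebra.smul_def,
      map_pow, map_neg, map_one, mul_one]

end Clifford

/-- For `d = 2k+2` with `k` even, the charge-conjugation matrix
`M_C = Γ^0 Γ^1 Γ^3 ⋯ Γ^{2k+1}` is invertible, satisfies `M_C conj(Γ^μ) M_C⁻¹ = -Γ^μ`
for all `μ`, and `M_C · conj(M_C) = (-1)^{k(k+1)/2} I` (computing `C²` on a Dirac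
fermion). -/
theorem charge_conjugation_matrix_k_even {n k : ℕ} (hk : Even k)
    (Γ : ℕ → Matrix (Fin n) (Fin n) ℂ)
    (hΓ : LorentzClifford (2 * k + 2) Γ)
    (hreal : ChiralReality (2 * k + 2) Γ)
    (M : Matrix (Fin n) (Fin n) ℂ)
    (hM : M = Γ 0 * (List.ofFn (fun a : Fin (k + 1) => Γ (2 * (a : ℕ) + 1))).prod) :
    IsUnit M ∧
    (∀ μ < 2 * k + 2, M * (Γ μ).map (starRingEnd ℂ) * M⁻¹ = -(Γ μ)) ∧
    M * M.map (starRingEnd ℂ) = ((-1 : ℂ) ^ (k * (k + 1) / 2)) • 1 := by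
  obtain rfl : M = chargeConjugation Γ k := hM.trans (chargeConjugation_eq_mul_prod_ofFn Γ k).symm
  simpa only [hk.add_one.neg_one_pow, neg_one_mul] using
    charge_conjugation_matrix_k_even_general hΓ hreal
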